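/- arXiv:1710.01108 — 3 statements merged into one kernel-verified Lean document; each statement's English description precedes it below -/
import Mathlib

section
/- Let x₀ be an interior point of I and let f, g, h : I → ℝ be continuous and strictly monotone. Suppose f and g are right-differentiable at x₀ with f'₊(x₀) ≠ 0 and g'₊(x₀) ≠ 0, and that A^[f] ≤ A^[h] ≤ A^[g]. Then h is right-differentiable at x₀ and h'₊(x₀) ≠ 0. (The analogous statement holds for left-sided derivatives.) -/
/-!
Up to sign, a generator is strictly increasing, and then `A^[f] ≤ A^[h]` forces `φ = h ∘ f⁻¹` to be
convex on `f '' I`: two-element means give midpoint convexity, and `φ` is continuous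
(`convexOn_of_midpoint`, `convexOn_comp_invFunOn`). A convex function has a finite right derivative
at each interior point, so by the chain rule for `h = φ ∘ f` there is a constant `c` such that
`f'₊(x₀) = d` implies `h'₊(x₀) = c * d` (`exists_rightDeriv_mul`).

Applied to the pair `(f, h)`, this gives the right differentiability of `h` at `x₀`. Applied to the
pair `(h, g)`, it shows that `g'₊(x₀)` is a multiple of `h'₊(x₀)`, which therefore cannot vanish.
-/

open Set Function Filter

/-- The quasi-arithmetic mean generated by `f` on the interval `I`,
applied to a vector `a ∈ Iⁿ`: `f⁻¹((f a₁ + ⋯ + f aₙ)/n)`, where the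
inverse of `f` is taken on `I`. -/
noncomputable def qam (I : Set ℝ) (f : ℝ → ℝ) {n : ℕ} (a : Fin n → ℝ) : ℝ :=
  Function.invFunOn f I ((∑ i, f (a i)) / n)

/-- The natural (pointwise) partial order on quasi-arithmetic means:
`A^[f] ≤ A^[g]` iff `A^[f](a) ≤ A^[g](a)` for every `n ≥ 1` and every `a ∈ Iⁿ`. -/
def qamLE (I : Set ℝ) (f g : ℝ → ℝ) : Prop :=
  ∀ n : ℕ, 1 ≤ n → ∀ a : Fin n → ℝ, (∀ i, a i ∈ I) → qam I f a ≤ qam I g a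

/-- `A^[f] = A^[g]` : equality of the two quasi-arithmetic means as means. -/
def qamEQ (I : Set ℝ) (f g : ℝ → ℝ) : Prop :=
  ∀ n : ℕ, 1 ≤ n → ∀ a : Fin n → ℝ, (∀ i, a i ∈ I) → qam I f a = qam I g a

/-- `f` is strictly monotone on `I` (strictly increasing or strictly decreasing). -/
def StrictMonoOrAntiOn (f : ℝ → ℝ) (I : Set ℝ) : Prop :=
  StrictMonoOn f I ∨ StrictAntiOn f I

/-- The comparison `A^[f] ≤ A^[h]` for two-element means only, stated without an inverse function:
`m` and `m'` are the means of `a` and `b` generated by `f` and by `h`. In this form the comparison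
is visibly unchanged when a generator is replaced by its negative. -/
def MidLE (I : Set ℝ) (f h : ℝ → ℝ) : Prop :=
  ∀ a ∈ I, ∀ b ∈ I, ∀ m ∈ I, ∀ m' ∈ I,
    f m = (f a + f b) / 2 → h m' = (h a + h b) / 2 → m ≤ m'

lemma StrictMonoOrAntiOn.injOn {I : Set ℝ} {f : ℝ → ℝ} (hf : StrictMonoOrAntiOn f I) :
    InjOn f I :=
  hf.elim StrictMonoOn.injOn StrictAntiOn.injOn

lemma qam_pair {I : Set ℝ} {f : ℝ → ℝ} (hf : InjOn f I) {a b m : ℝ} (hm : m ∈ I)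
    (h : f m = (f a + f b) / 2) : qam I f ![a, b] = m := by
  have hsum : (∑ i, f (![a, b] i)) / ((2 : ℕ) : ℝ) = f m := by simp [h]
  exact (congrArg (invFunOn f I) hsum).trans (hf.leftInvOn_invFunOn hm)

lemma qamLE.midLE {I : Set ℝ} {f h : ℝ → ℝ} (hf : InjOn f I) (hh : InjOn h I)
    (hle : qamLE I f h) : MidLE I f h := by
  intro a ha b hb m hm m' hm' h1 h2
  rw [← qam_pair hf hm h1, ← qam_pair hh hm' h2]
  refine hle 2 (by norm_num) _ fun i => ?_
  fin_cases i <;> simpa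

/-- A continuous midpoint convex function on `[0, 1]` vanishing at both endpoints is nonpositive:
otherwise midpoint convexity fails at the smallest point where the maximum is attained. -/
lemma nonpos_of_midpoint {ψ : ℝ → ℝ} (hc : ContinuousOn ψ (Icc 0 1))
    (h0 : ψ 0 = 0) (h1 : ψ 1 = 0)
    (hm : ∀ s ∈ Icc (0 : ℝ) 1, ∀ t ∈ Icc (0 : ℝ) 1, ψ ((s + t) / 2) ≤ (ψ s + ψ t) / 2)
    {t : ℝ} (ht : t ∈ Icc (0 : ℝ) 1) : ψ t ≤ 0 := by
  by_contra! hpos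
  obtain ⟨z, hz, hzmax⟩ := isCompact_Icc.exists_isMaxOn ⟨t, ht⟩ hc
  have hK : IsCompact (Icc (0 : ℝ) 1 ∩ ψ ⁻¹' {ψ z}) :=
    isCompact_Icc.of_isClosed_subset (hc.preimage_isClosed_of_isClosed isClosed_Icc
      isClosed_singleton) inter_subset_left
  obtain ⟨c, ⟨hc01, hcz⟩, hleast⟩ := hK.exists_isLeast ⟨z, hz, rfl⟩
  have hcz' : ψ c = ψ z := hcz
  have hzpos : 0 < ψ z := hpos.trans_le (hzmax ht)
  have hc0 : 0 < c := lt_of_le_of_ne hc01.1 (by rintro rfl; linarith)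
  have hc1 : c < 1 := lt_of_le_of_ne hc01.2 (by rintro rfl; linarith)
  obtain ⟨δ, hδ, hδc, hδ1⟩ : ∃ δ : ℝ, 0 < δ ∧ δ ≤ c ∧ δ ≤ 1 - c :=
    ⟨min c (1 - c), lt_min hc0 (by linarith), min_le_left _ _, min_le_right _ _⟩
  have hl : c - δ ∈ Icc (0 : ℝ) 1 := ⟨by linarith, by linarith⟩
  have hr : c + δ ∈ Icc (0 : ℝ) 1 := ⟨by linarith, by linarith⟩
  have hlt : ψ (c - δ) < ψ z := by
    refine lt_of_le_of_ne (hzmax hl) fun he => ?_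
    have := hleast ⟨hl, he⟩
    linarith
  have hle : ψ (c + δ) ≤ ψ z := hzmax hr
  have key := hm _ hl _ hr
  rw [show (c - δ + (c + δ)) / 2 = c by ring] at key
  linarith

lemma convexOn_of_midpoint {s : Set ℝ} {φ : ℝ → ℝ} (hs : Convex ℝ s) (hc : ContinuousOn φ s)
    (hm : ∀ x ∈ s, ∀ y ∈ s, φ ((x + y) / 2) ≤ (φ x + φ y) / 2) : ConvexOn ℝ s φ := by
  refine ⟨hs, fun x hx y hy a b ha hb hab => ?_⟩
  have hmem : ∀ t ∈ Icc (0 : ℝ) 1, (1 - t) * x + t * y ∈ s := fun t ht =>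
    hs hx hy (by linarith [ht.2]) ht.1 (by ring)
  have hcont : ContinuousOn (fun t : ℝ => φ ((1 - t) * x + t * y) - ((1 - t) * φ x + t * φ y))
      (Icc 0 1) := by
    refine ContinuousOn.sub ?_ (by fun_prop)
    exact hc.comp (f := fun t : ℝ => (1 - t) * x + t * y) (by fun_prop) hmem
  have key := nonpos_of_midpoint hcont (by simp) (by simp)
    (fun u hu v hv => by
      have := hm _ (hmem u hu) _ (hmem v hv)
      rw [show ((1 - u) * x + u * y + ((1 - v) * x + v * y)) / 2
        = (1 - (u + v) / 2) * x + (u + v) / 2 * y by ring] at this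
      linarith)
    (t := b) ⟨hb, by linarith⟩
  obtain rfl : a = 1 - b := by linarith
  simpa using key

lemma ordConnected_image {I : Set ℝ} (hI : I.OrdConnected) {f : ℝ → ℝ} (hf : ContinuousOn f I) :
    (f '' I).OrdConnected :=
  (hI.isPreconnected.image f hf).ordConnected

lemma continuousOn_invFunOn {I : Set ℝ} (hI : I.OrdConnected) {f : ℝ → ℝ}
    (hf : StrictMonoOn f I) (hfc : ContinuousOn f I) :
    ContinuousOn (invFunOn f I) (f '' I) := by
  have := hI
  have := ordConnected_image hI hfc
  -- An order isomorphism between intervals is a homeomorphism.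
  have h := continuous_subtype_val.comp (hf.orderIso f I).symm.continuous
  rw [continuousOn_iff_continuous_domRestrict]
  refine h.congr fun y => ?_
  obtain ⟨x, rfl⟩ := (hf.orderIso f I).surjective y
  have : ((hf.orderIso f I x : f '' I) : ℝ) = f x := rfl
  simp [this, hf.injOn.leftInvOn_invFunOn x.2]

/-- For increasing generators, comparison of the means makes `h ∘ f⁻¹` convex. -/
lemma convexOn_comp_invFunOn {I : Set ℝ} (hI : I.OrdConnected) {f h : ℝ → ℝ}
    (hf : StrictMonoOn f I) (hh : StrictMonoOn h I) (hfc : ContinuousOn f I)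
    (hhc : ContinuousOn h I) (hle : MidLE I f h) :
    ConvexOn ℝ (f '' I) (h ∘ invFunOn f I) := by
  have hcf : Convex ℝ (f '' I) := (ordConnected_image hI hfc).convex
  have hch : Convex ℝ (h '' I) := (ordConnected_image hI hhc).convex
  refine convexOn_of_midpoint hcf
    (hhc.comp (continuousOn_invFunOn hI hf hfc) fun y hy => invFunOn_mem hy) ?_
  rintro _ ⟨a, ha, rfl⟩ _ ⟨b, hb, rfl⟩
  have hmid : ∀ k : ℝ → ℝ, Convex ℝ (k '' I) → ∃ m ∈ I, k m = (k a + k b) / 2 := by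
    intro k hk
    have := hk (mem_image_of_mem k ha) (mem_image_of_mem k hb)
      (by norm_num : (0 : ℝ) ≤ 1 / 2) (by norm_num : (0 : ℝ) ≤ 1 / 2) (by norm_num)
    obtain ⟨m, hm, hme⟩ := this
    exact ⟨m, hm, by rw [hme, smul_eq_mul, smul_eq_mul]; ring⟩
  obtain ⟨m, hm, hfm⟩ := hmid f hcf
  obtain ⟨m', hm', hhm⟩ := hmid h hch
  have inv := hf.injOn.leftInvOn_invFunOn
  simp only [comp_apply]
  rw [← hfm, inv hm, inv ha, inv hb, ← hhm]
  exact (hh.le_iff_le hm hm').2 (hle a ha b hb m hm m' hm' hfm hhm)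

lemma exists_rightDeriv_mul_of_strictMonoOn {I : Set ℝ} (hI : I.OrdConnected) {x₀ : ℝ}
    (hx₀ : x₀ ∈ interior I) {f h : ℝ → ℝ} (hf : StrictMonoOn f I) (hh : StrictMonoOn h I)
    (hfc : ContinuousOn f I) (hhc : ContinuousOn h I) (hle : MidLE I f h) :
    ∃ c : ℝ, ∀ d, HasDerivWithinAt f d (Ioi x₀) x₀ → HasDerivWithinAt h (c * d) (Ioi x₀) x₀ := by
  have hconv := convexOn_comp_invFunOn hI hf hh hfc hhc hle
  have hxI := interior_subset hx₀
  obtain ⟨ε, hε, hball⟩ := Metric.mem_nhds_iff.1 (mem_interior_iff_mem_nhds.1 hx₀)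
  rw [Real.ball_eq_Ioo] at hball
  have ha : x₀ - ε / 2 ∈ I := hball ⟨by linarith, by linarith⟩
  have hb : x₀ + ε / 2 ∈ I := hball ⟨by linarith, by linarith⟩
  have hxb : x₀ < x₀ + ε / 2 := by linarith
  have hint : f x₀ ∈ interior (f '' I) := by
    refine mem_interior_iff_mem_nhds.2 (mem_of_superset
      (Icc_mem_nhds (hf ha hxI (by linarith)) (hf hxI hb hxb)) ?_)
    exact (ordConnected_image hI hfc).out (mem_image_of_mem f ha) (mem_image_of_mem f hb)
  refine ⟨derivWithin (h ∘ invFunOn f I) (Ioi (f x₀)) (f x₀), fun d hd => ?_⟩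
  -- `f` is monotone only on `I`, so the chain rule is applied on a right neighbourhood inside `I`.
  have hd' : HasDerivWithinAt f d (Ioo x₀ (x₀ + ε / 2)) x₀ := hd.mono Ioo_subset_Ioi_self
  have hsub : Ioo x₀ (x₀ + ε / 2) ⊆ I := fun y hy => hI.out hxI hb ⟨hy.1.le, hy.2.le⟩
  have hcomp := (hconv.hasDerivWithinAt_rightDeriv_of_mem_interior hint).comp x₀ hd'
    fun y hy => hf hxI (hsub hy) hy.1
  refine (hcomp.congr (fun y hy => ?_) ?_).mono_of_mem_nhdsWithin (Ioo_mem_nhdsGT hxb)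
  · simp [hf.injOn.leftInvOn_invFunOn (hsub hy)]
  · simp [hf.injOn.leftInvOn_invFunOn hxI]

/-- Replacing a decreasing generator by its negative changes neither the mean nor the claim, apart
from the sign of `c`, so both generators may be assumed increasing. -/
lemma exists_rightDeriv_mul {I : Set ℝ} (hI : I.OrdConnected) {x₀ : ℝ}
    (hx₀ : x₀ ∈ interior I) {f h : ℝ → ℝ} (hf : StrictMonoOrAntiOn f I)
    (hh : StrictMonoOrAntiOn h I) (hfc : ContinuousOn f I) (hhc : ContinuousOn h I)
    (hle : qamLE I f h) :
    ∃ c : ℝ, ∀ d, HasDerivWithinAt f d (Ioi x₀) x₀ → HasDerivWithinAt h (c * d) (Ioi x₀) x₀ := by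
  have hmid := hle.midLE hf.injOn hh.injOn
  clear hle
  wlog hf' : StrictMonoOn f I generalizing f
  · obtain hf' := hf.resolve_left hf'
    obtain ⟨c, hc⟩ := this (f := -f) (Or.inl hf'.neg) hfc.neg
      (fun a ha b hb m hm m' hm' h1 h2 => hmid a ha b hb m hm m' hm'
        (by simp only [Pi.neg_apply] at h1; linarith) h2) hf'.neg
    exact ⟨-c, fun d hd => by simpa using hc (-d) hd.neg⟩
  wlog hh' : StrictMonoOn h I generalizing h
  · obtain hh' := hh.resolve_left hh'
    obtain ⟨c, hc⟩ := this (h := -h) (Or.inl hh'.neg) hhc.neg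
      (fun a ha b hb m hm m' hm' h1 h2 => hmid a ha b hb m hm m' hm' h1
        (by simp only [Pi.neg_apply] at h2; linarith)) hh'.neg
    exact ⟨-c, fun d hd => by simpa using (hc d hd).neg⟩
  exact exists_rightDeriv_mul_of_strictMonoOn hI hx₀ hf' hh' hfc hhc hmid

/-- Corollary 2: if `f, g` are right-differentiable at an interior
point `x₀` with nonvanishing right derivatives and `A^[f] ≤ A^[h] ≤ A^[g]`, then `h`
is right-differentiable at `x₀` with nonvanishing right derivative. -/
theorem right_deriv_nonzero_interval_type
    (I : Set ℝ) (hI : I.OrdConnected) (hInontriv : ∃ x ∈ I, ∃ y ∈ I, x < y)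
    (x₀ : ℝ) (hx₀ : x₀ ∈ interior I)
    (f g h : ℝ → ℝ)
    (hfc : ContinuousOn f I) (hgc : ContinuousOn g I) (hhc : ContinuousOn h I)
    (hfm : StrictMonoOrAntiOn f I) (hgm : StrictMonoOrAntiOn g I)
    (hhm : StrictMonoOrAntiOn h I)
    (df : ℝ) (hdf : df ≠ 0) (hfd : HasDerivWithinAt f df (Ioi x₀) x₀)
    (dg : ℝ) (hdg : dg ≠ 0) (hgd : HasDerivWithinAt g dg (Ioi x₀) x₀)
    (hle₁ : qamLE I f h) (hle₂ : qamLE I h g) :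
    ∃ d : ℝ, d ≠ 0 ∧ HasDerivWithinAt h d (Ioi x₀) x₀ := by
  obtain ⟨c, hc⟩ := exists_rightDeriv_mul hI hx₀ hfm hhm hfc hhc hle₁
  obtain ⟨c', hc'⟩ := exists_rightDeriv_mul hI hx₀ hhm hgm hhc hgc hle₂
  refine ⟨c * df, fun h0 => hdg ?_, hc df hfd⟩
  have huniq := (uniqueDiffWithinAt_Ioi x₀).eq_deriv _ hgd (hc' _ (hc df hfd))
  rw [huniq, h0, mul_zero]
end

section
/- Let x₀ be an interior point of I and let g, h : I → ℝ be continuous and strictly monotone. If g and h are right-differentiable at x₀ with g'₊(x₀) = 0 and h'₊(x₀) ≠ 0, then A^[g] and A^[h] are not comparable: neither A^[g] ≤ A^[h] nor A^[h] ≤ A^[g] holds. (The analogous statement holds for left-sided derivatives.) -/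
/-!
A quasi-arithmetic mean is unchanged under affine changes of its generator, so one may take
increasing generators `G`, `H` (of `g`, `h`) vanishing at `x₀`; then `c ≤ A^[g](a)` is equivalent to
`n * G c ≤ ∑ G (a i)` (`exists_normalized`). The derivative hypotheses say `G x ≤ ε * H x`
for every `ε > 0` and `x > x₀` close to `x₀` (`eventually_le_eps_mul`).

If `A^[g] ≤ A^[h]`, fix `y > x₀` and compare one copy of `y` and `n` copies of `x₀` with a nearby
point `x`: whenever `(n + 1) * G x ≤ G y`, also `(n + 1) * H x ≤ H y`. Taking `n` maximal,
`(n + 1) * G x` is at least `G y - G x ≥ G y / 2`, so `(n + 1) * H x` is at least `G y / (2 ε)`,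
which is unbounded as `ε → 0`.

If `A^[h] ≤ A^[g]`, fix `z < x₀` and compare one copy of `z` and `n` copies of `x` with `x₀`:
whenever `0 ≤ H z + n * H x`, also `0 ≤ G z + n * G x`. Taking `n` minimal, `n * H x` is bounded by
`1 - H z`, so `n * G x ≤ ε * (1 - H z)` is eventually smaller than `-G z`.
-/

open Set Function Filter

/-- A mean of values of `f` on the interval `I` is again a value of `f` on `I`, so the choice of
inverse in `qam` is genuine. -/
lemma qam_spec {I : Set ℝ} (hI : I.OrdConnected) {f : ℝ → ℝ} (hf : ContinuousOn f I)
    {n : ℕ} (hn : 1 ≤ n) {a : Fin n → ℝ} (ha : ∀ i, a i ∈ I) :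
    qam I f a ∈ I ∧ n * f (qam I f a) = ∑ i, f (a i) := by
  have hn' : (n : ℝ) ≠ 0 := by positivity
  have hconv : Convex ℝ (f '' I) := (hI.isPreconnected.image f hf).ordConnected.convex
  have hmem : (∑ i, f (a i)) / n ∈ f '' I := by
    have := hconv.sum_mem (t := Finset.univ) (w := fun _ : Fin n => (n : ℝ)⁻¹)
      (z := fun i => f (a i)) (fun _ _ => by positivity) (by simp [hn'])
      (fun i _ => mem_image_of_mem f (ha i))
    rwa [← Finset.smul_sum, smul_eq_mul, inv_mul_eq_div] at this
  refine ⟨Function.invFunOn_mem hmem, ?_⟩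
  have h2 : f (qam I f a) = (∑ i, f (a i)) / n := Function.invFunOn_eq hmem
  rw [h2]
  field_simp

/-- A generator `f` can be replaced by an increasing `F = s * (f - f x₀)` with `s = ±1`, vanishing
at `x₀`, whose sums decide when a point of `I` lies below the mean. -/
lemma exists_normalized {I : Set ℝ} (hI : I.OrdConnected) {f : ℝ → ℝ} (hf : ContinuousOn f I)
    (hfm : StrictMonoOrAntiOn f I) (x₀ : ℝ) :
    ∃ (F : ℝ → ℝ) (s : ℝ), s ≠ 0 ∧ StrictMonoOn F I ∧ F x₀ = 0 ∧
      (∀ d, HasDerivWithinAt f d (Ioi x₀) x₀ → HasDerivWithinAt F (s * d) (Ioi x₀) x₀) ∧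
      ∀ (n : ℕ), 1 ≤ n → ∀ a : Fin n → ℝ, (∀ i, a i ∈ I) → ∀ c ∈ I,
        (c ≤ qam I f a ↔ n * F c ≤ ∑ i, F (a i)) := by
  obtain ⟨s, hs, hmono⟩ : ∃ s : ℝ, s ≠ 0 ∧ StrictMonoOn (fun x => s * (f x - f x₀)) I := by
    rcases hfm with h | h
    · exact ⟨1, one_ne_zero, fun x hx y hy hxy => by simpa using h hx hy hxy⟩
    · refine ⟨-1, by norm_num, fun x hx y hy hxy => ?_⟩
      have := h hx hy hxy
      dsimp only
      linarith
  refine ⟨_, s, hs, hmono, by simp, fun d hd => (hd.sub_const _).const_mul s, ?_⟩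
  intro n hn a ha c hc
  obtain ⟨h1, h2⟩ := qam_spec hI hf hn ha
  rw [← hmono.le_iff_le hc h1]
  have hsum : ∑ i, s * (f (a i) - f x₀) = n * (s * (f (qam I f a) - f x₀)) := by
    rw [← Finset.mul_sum, Finset.sum_sub_distrib, ← h2]
    simp
    ring
  rw [hsum]
  have hn' : (0 : ℝ) < n := by exact_mod_cast hn
  exact (mul_le_mul_iff_right₀ hn').symm

lemma eventually_le_eps_mul {I : Set ℝ} {x₀ : ℝ} (hx₀ : x₀ ∈ interior I) {G H : ℝ → ℝ}
    (hH : StrictMonoOn H I) (hG0 : G x₀ = 0) (hH0 : H x₀ = 0)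
    (hGd : HasDerivWithinAt G 0 (Ioi x₀) x₀)
    {d : ℝ} (hd : d ≠ 0) (hHd : HasDerivWithinAt H d (Ioi x₀) x₀) {ε : ℝ} (hε : 0 < ε) :
    ∀ᶠ x in nhdsWithin x₀ (Ioi x₀), G x ≤ ε * H x := by
  have hI : ∀ᶠ x in nhdsWithin x₀ (Ioi x₀), x ∈ I :=
    mem_nhdsWithin_of_mem_nhds (mem_interior_iff_mem_nhds.1 hx₀)
  have hgt : ∀ᶠ x in nhdsWithin x₀ (Ioi x₀), x₀ < x := self_mem_nhdsWithin
  have hxI : x₀ ∈ I := interior_subset hx₀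
  rw [hasDerivWithinAt_iff_tendsto_slope' (by simp)] at hGd hHd
  have hd0 : 0 ≤ d := by
    refine ge_of_tendsto hHd ?_
    filter_upwards [hI, hgt] with x hx hxx
    rw [slope_def_field]
    exact div_nonneg (sub_nonneg.2 (hH hxI hx hxx).le) (sub_nonneg.2 hxx.le)
  have hdpos : 0 < d := lt_of_le_of_ne hd0 hd.symm
  have hlt := hGd.eventually_lt (hHd.const_mul ε) (by positivity)
  filter_upwards [hlt, hgt] with x hx hxx
  rw [slope_def_field, slope_def_field, hG0, hH0, sub_zero, sub_zero, ← mul_div_assoc,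
    div_lt_div_iff_of_pos_right (sub_pos.2 hxx)] at hx
  exact hx.le

/-- Lemma 1: if, at an interior point `x₀`, `g'₊(x₀) = 0` and
`h'₊(x₀) ≠ 0`, then `A^[g]` and `A^[h]` are not comparable. -/
theorem not_comparable_of_right_deriv_zero_nonzero
    (I : Set ℝ) (hI : I.OrdConnected) (hInontriv : ∃ x ∈ I, ∃ y ∈ I, x < y)
    (x₀ : ℝ) (hx₀ : x₀ ∈ interior I)
    (g h : ℝ → ℝ)
    (hgc : ContinuousOn g I) (hhc : ContinuousOn h I)
    (hgm : StrictMonoOrAntiOn g I) (hhm : StrictMonoOrAntiOn h I)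
    (hgd : HasDerivWithinAt g 0 (Ioi x₀) x₀)
    (d : ℝ) (hd : d ≠ 0) (hhd : HasDerivWithinAt h d (Ioi x₀) x₀) :
    ¬ qamLE I g h ∧ ¬ qamLE I h g := by
  have hxI : x₀ ∈ I := interior_subset hx₀
  have hnhds : I ∈ nhds x₀ := mem_interior_iff_mem_nhds.1 hx₀
  obtain ⟨G, s, hs, hGm, hG0, hGd, hGq⟩ := exists_normalized hI hgc hgm x₀
  obtain ⟨H, t, ht, hHm, hH0, hHd, hHq⟩ := exists_normalized hI hhc hhm x₀
  replace hGd := hGd _ hgd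
  replace hHd := hHd _ hhd
  rw [mul_zero] at hGd
  have hratio := fun {ε : ℝ} (hε : 0 < ε) =>
    eventually_le_eps_mul hx₀ hHm hG0 hH0 hGd (mul_ne_zero ht hd) hHd hε
  have hevI : ∀ᶠ x in nhdsWithin x₀ (Ioi x₀), x ∈ I := mem_nhdsWithin_of_mem_nhds hnhds
  have hgt : ∀ᶠ x in nhdsWithin x₀ (Ioi x₀), x₀ < x := self_mem_nhdsWithin
  have hmem : ∀ {y x : ℝ} {n : ℕ}, y ∈ I → x ∈ I →
      ∀ i, (Fin.cons y (fun _ : Fin n => x) : Fin (n + 1) → ℝ) i ∈ I := by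
    intro y x n hy hx i
    refine Fin.cases ?_ (fun j => ?_) i <;> simp [hy, hx]
  constructor
  · intro hle
    have key : ∀ y ∈ I, ∀ x ∈ I, ∀ c ∈ I, ∀ n : ℕ,
        (n + 1) * G c ≤ G y + n * G x → (n + 1) * H c ≤ H y + n * H x := by
      intro y hy x hx c hc n hn
      have h1 := (hGq (n + 1) (by omega) _ (hmem (n := n) hy hx) c hc).2
        (by simpa [Fin.sum_univ_succ] using hn)
      have h2 := (hHq (n + 1) (by omega) _ (hmem (n := n) hy hx) c hc).1
        (h1.trans (hle _ (by omega) _ (hmem hy hx)))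
      simpa [Fin.sum_univ_succ] using h2
    obtain ⟨y, hy, hxy⟩ := (hevI.and hgt).exists
    have hGy : 0 < G y := hG0 ▸ hGm hxI hy hxy
    have hHy : 0 < H y := hH0 ▸ hHm hxI hy hxy
    have hcont : ∀ᶠ x in nhdsWithin x₀ (Ioi x₀), G x < G y / 2 :=
      hGd.continuousWithinAt.eventually_lt_const (by rw [hG0]; positivity)
    -- The factor 4 makes `(n + 1) * H x` exceed `H y` strictly.
    obtain ⟨x, ⟨⟨hx, hxx⟩, hGx⟩, hr⟩ := (((hevI.and hgt).and hcont).and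
      (hratio (ε := G y / (4 * H y)) (by positivity))).exists
    have hGx0 : 0 < G x := hG0 ▸ hGm hxI hx hxx
    have h1 : 1 ≤ ⌊G y / G x⌋₊ := Nat.le_floor (by
      rw [Nat.cast_one, le_div_iff₀ hGx0]; linarith)
    obtain ⟨n, hn⟩ := Nat.exists_eq_add_of_le' h1
    have hfl := Nat.floor_le (div_nonneg hGy.le hGx0.le)
    have hfu := Nat.lt_floor_add_one (G y / G x)
    rw [hn] at hfl hfu
    push_cast at hfl hfu
    rw [le_div_iff₀ hGx0] at hfl
    rw [div_lt_iff₀ hGx0] at hfu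
    have h3 := key y hy x₀ hxI x hx n (by rw [hG0]; linarith)
    rw [hH0, mul_zero, add_zero] at h3
    have h4 : ((n : ℝ) + 1) * G x ≤ G y / 4 := by
      calc ((n : ℝ) + 1) * G x ≤ (n + 1) * (G y / (4 * H y) * H x) := by gcongr
        _ = G y / (4 * H y) * ((n + 1) * H x) := by ring
        _ ≤ G y / (4 * H y) * H y := by gcongr
        _ = G y / 4 := by field_simp
    linarith
  · intro hle
    have key : ∀ y ∈ I, ∀ x ∈ I, ∀ c ∈ I, ∀ n : ℕ,
        (n + 1) * H c ≤ H y + n * H x → (n + 1) * G c ≤ G y + n * G x := by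
      intro y hy x hx c hc n hn
      have h1 := (hHq (n + 1) (by omega) _ (hmem (n := n) hy hx) c hc).2
        (by simpa [Fin.sum_univ_succ] using hn)
      have h2 := (hGq (n + 1) (by omega) _ (hmem (n := n) hy hx) c hc).1
        (h1.trans (hle _ (by omega) _ (hmem hy hx)))
      simpa [Fin.sum_univ_succ] using h2
    obtain ⟨z, hz, hzx⟩ : ∃ z, z ∈ I ∧ z < x₀ := by
      have h1 : ∀ᶠ x in nhdsWithin x₀ (Iio x₀), x ∈ I := mem_nhdsWithin_of_mem_nhds hnhds
      have h2 : ∀ᶠ x in nhdsWithin x₀ (Iio x₀), x < x₀ := self_mem_nhdsWithin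
      exact (h1.and h2).exists
    have hGz : G z < 0 := hG0 ▸ hGm hz hxI hzx
    have hHz : H z < 0 := hH0 ▸ hHm hz hxI hzx
    have hcont : ∀ᶠ x in nhdsWithin x₀ (Ioi x₀), H x < 1 :=
      hHd.continuousWithinAt.eventually_lt_const (by rw [hH0]; norm_num)
    have hB : 0 < 1 - H z := by linarith
    obtain ⟨x, ⟨⟨hx, hxx⟩, hHx⟩, hr⟩ := (((hevI.and hgt).and hcont).and
      (hratio (ε := -G z / (2 * (1 - H z))) (div_pos (by linarith) (by linarith)))).exists
    have hHx0 : 0 < H x := hH0 ▸ hHm hxI hx hxx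
    have hcl := Nat.le_ceil (-H z / H x)
    have hcu := Nat.ceil_lt_add_one (a := -H z / H x) (div_nonneg (by linarith) hHx0.le)
    generalize ⌈-H z / H x⌉₊ = n at hcl hcu
    rw [div_le_iff₀ hHx0] at hcl
    have hcu' : (n : ℝ) * H x ≤ 1 - H z := by
      have := mul_lt_mul_of_pos_right hcu hHx0
      rw [add_mul, div_mul_cancel₀ _ hHx0.ne'] at this
      linarith
    have h3 := key z hz x hx x₀ hxI n (by rw [hH0]; linarith)
    rw [hG0, mul_zero] at h3
    have hε : 0 ≤ -G z / (2 * (1 - H z)) := div_nonneg (by linarith) (by linarith)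
    have h4 : (n : ℝ) * G x ≤ -G z / 2 := by
      calc (n : ℝ) * G x ≤ n * (-G z / (2 * (1 - H z)) * H x) := by gcongr
        _ = -G z / (2 * (1 - H z)) * (n * H x) := by ring
        _ ≤ -G z / (2 * (1 - H z)) * (1 - H z) := by gcongr
        _ = -G z / 2 := by field_simp
    linarith
end

section
/- Let I ⊆ ℝ be an open nontrivial interval and let f, g, h : I → ℝ be continuous and strictly monotone. Suppose f and g are differentiable at every point of I and that A^[f] ≤ A^[h] ≤ A^[g]. Then h is differentiable at every point of I. -/
/-!
Replacing a generator by its negative does not change its mean, so all three generators may be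
taken strictly increasing. Then `A^[f] ≤ A^[h]` says that `h ∘ f⁻¹` is convex; its supporting line
at `f x₀` gives `m > 0` with `h x - h x₀ ≥ m * (f x - f x₀)` on `I` (`exists_support`). In the same
way `A^[h] ≤ A^[g]` gives `h x - h x₀ ≤ M * (g x - g x₀)`. Hence `h` is squeezed near `x₀` between
two functions differentiable at `x₀` that touch there; their derivatives at `x₀` agree because
their difference has a local minimum, and the squeeze makes `h` differentiable
(`differentiableAt_of_squeeze`).
-/

open Set Function Filter

theorem qam_neg (I : Set ℝ) (f : ℝ → ℝ) {n : ℕ} (a : Fin n → ℝ) :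
    qam I (fun x => -f x) a = qam I f a := by
  have key : ∀ v : ℝ, invFunOn (fun x => -f x) I (-v) = invFunOn f I v := by
    intro v
    -- `invFunOn` chooses from the set of preimages in `I`, which is the same on both sides, so
    -- this holds whether or not a preimage exists.
    have hp : (fun x => x ∈ I ∧ -f x = -v) = fun x => x ∈ I ∧ f x = v := by
      simp only [neg_inj]
    unfold invFunOn
    congr!
  unfold qam
  rw [← key, Finset.sum_neg_distrib, neg_div]

/-- The mean of `k` copies of `x` and `l` copies of `y` lies in `I`, and `f` maps it to the
weighted average. -/
theorem qam_append_spec {I : Set ℝ} (hI : I.OrdConnected) {f : ℝ → ℝ} (hfc : ContinuousOn f I)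
    (hf : StrictMonoOn f I) {x y : ℝ} (hx : x ∈ I) (hy : y ∈ I) (hxy : x < y)
    {k l : ℕ} (hl : 0 < l) :
    qam I f (Fin.append (fun _ : Fin k => x) (fun _ : Fin l => y)) ∈ I ∧
    f (qam I f (Fin.append (fun _ : Fin k => x) (fun _ : Fin l => y)))
      = (k * f x + l * f y) / (k + l) := by
  have hsum : (∑ i, f (Fin.append (fun _ : Fin k => x) (fun _ : Fin l => y) i)) / ((k + l : ℕ) : ℝ)
      = (k * f x + l * f y) / (k + l) := by
    simp [Fin.sum_univ_add]
  have hlt : f x < f y := hf hx hy hxy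
  have hl' : (0 : ℝ) < l := by exact_mod_cast hl
  have hk' : (0 : ℝ) ≤ k := by positivity
  have hex : ∃ z ∈ I, f z = (k * f x + l * f y) / (k + l) := by
    have hsub : Icc x y ⊆ I := hI.out hx hy
    have hmem : (k * f x + l * f y) / (k + l) ∈ Icc (f x) (f y) := by
      constructor
      · rw [le_div_iff₀ (by positivity)]; nlinarith
      · rw [div_le_iff₀ (by positivity)]; nlinarith
    obtain ⟨z, hz, hfz⟩ := intermediate_value_Icc hxy.le (hfc.mono hsub) hmem
    exact ⟨z, hsub hz, hfz⟩
  unfold qam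
  rw [hsum]
  exact ⟨invFunOn_mem hex, invFunOn_eq hex⟩

/-- Chord slopes of `h` against `f` increase, in cross-multiplied form: this is the convexity of
`h ∘ f⁻¹`. -/
theorem slope_le {I : Set ℝ} (hI : I.OrdConnected) {f h : ℝ → ℝ}
    (hfc : ContinuousOn f I) (hhc : ContinuousOn h I)
    (hf : StrictMonoOn f I) (hh : StrictMonoOn h I) (hle : qamLE I f h)
    {x z y : ℝ} (hx : x ∈ I) (hz : z ∈ I) (hy : y ∈ I) (hxz : x < z) (hzy : z < y) :
    (h z - h x) / (f z - f x) ≤ (h y - h z) / (f y - f z) := by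
  have hA : 0 < f z - f x := sub_pos.2 (hf hx hz hxz)
  have hB : 0 < f y - f z := sub_pos.2 (hf hz hy hzy)
  have hC : 0 < h z - h x := sub_pos.2 (hh hx hz hxz)
  have hD : 0 < h y - h z := sub_pos.2 (hh hz hy hzy)
  rw [div_le_div_iff₀ hA hB]
  by_contra! hlt
  -- If convexity fails, some weights `k : l` put the `f`-mean of `x, y` above `z` and
  -- the `h`-mean below `z`.
  have hlt' : (h y - h z) / (h z - h x) < (f y - f z) / (f z - f x) := by
    rw [div_lt_div_iff₀ hC hA]; linarith
  obtain ⟨q, hq1, hq2⟩ := exists_rat_btwn hlt'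
  have hq0 : 0 < q := by
    have : (0 : ℝ) < q := (div_pos hD hC).trans hq1
    exact_mod_cast this
  obtain ⟨k, l, hl, hq⟩ : ∃ k l : ℕ, 0 < l ∧ (q : ℝ) = k / l := by
    refine ⟨q.num.toNat, q.den, q.den_pos, ?_⟩
    have hn : ((q.num.toNat : ℤ)) = q.num := Int.toNat_of_nonneg (Rat.num_pos.2 hq0).le
    have hn' : ((q.num.toNat : ℕ) : ℝ) = (q.num : ℝ) := by exact_mod_cast hn
    rw [hn', Rat.cast_def]
  have hl' : (0 : ℝ) < l := by exact_mod_cast hl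
  have hk' : (0 : ℝ) ≤ k := by positivity
  rw [hq, div_lt_div_iff₀ hC hl'] at hq1
  rw [hq, div_lt_div_iff₀ hl' hA] at hq2
  obtain ⟨hfI, hfe⟩ := qam_append_spec (k := k) hI hfc hf hx hy (hxz.trans hzy) hl
  obtain ⟨hhI, hhe⟩ := qam_append_spec (k := k) hI hhc hh hx hy (hxz.trans hzy) hl
  have h1 := hle (k + l) (by omega) (Fin.append (fun _ : Fin k => x) (fun _ : Fin l => y)) (by
    intro i
    refine Fin.addCases (fun i => ?_) (fun i => ?_) i <;> simp [hx, hy])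
  have h2 : z < qam I f (Fin.append (fun _ : Fin k => x) (fun _ : Fin l => y)) := by
    rw [← hf.lt_iff_lt hz hfI, hfe, lt_div_iff₀ (by positivity)]
    nlinarith
  have h3 : qam I h (Fin.append (fun _ : Fin k => x) (fun _ : Fin l => y)) < z := by
    rw [← hh.lt_iff_lt hhI hz, hhe, div_lt_iff₀ (by positivity)]
    nlinarith
  linarith

/-- The supporting line of `h ∘ f⁻¹` at `f z`. Its slope is positive, so the inequality can also
be solved for `f`. -/
theorem exists_support {I : Set ℝ} (hI : I.OrdConnected) (hIo : IsOpen I) {f h : ℝ → ℝ}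
    (hfc : ContinuousOn f I) (hhc : ContinuousOn h I)
    (hf : StrictMonoOn f I) (hh : StrictMonoOn h I) (hle : qamLE I f h)
    {z : ℝ} (hz : z ∈ I) :
    ∃ m : ℝ, 0 < m ∧ ∀ x ∈ I, m * (f x - f z) ≤ h x - h z := by
  obtain ⟨ε, hε, hball⟩ := Metric.isOpen_iff.1 hIo z hz
  have hl : z - ε / 2 ∈ I := hball (by
    rw [Metric.mem_ball, Real.dist_eq, abs_lt]; constructor <;> linarith)
  have hr : z + ε / 2 ∈ I := hball (by
    rw [Metric.mem_ball, Real.dist_eq, abs_lt]; constructor <;> linarith)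
  obtain ⟨m, hm1, hm2⟩ := exists_between_of_forall_le
    (s := (fun x => (h z - h x) / (f z - f x)) '' (I ∩ Iio z))
    (t := (fun y => (h y - h z) / (f y - f z)) '' (I ∩ Ioi z))
    ⟨_, mem_image_of_mem _ ⟨hl, by simp [hε]⟩⟩ ⟨_, mem_image_of_mem _ ⟨hr, by simp [hε]⟩⟩ (by
      rintro _ ⟨x, ⟨hx, hxz⟩, rfl⟩ _ ⟨y, ⟨hy, hzy⟩, rfl⟩
      exact slope_le hI hfc hhc hf hh hle hx hz hy hxz hzy)
  have left : ∀ x ∈ I, x < z → (h z - h x) / (f z - f x) ≤ m := fun x hx hxz =>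
    hm1 (mem_image_of_mem _ ⟨hx, hxz⟩)
  have right : ∀ y ∈ I, z < y → m ≤ (h y - h z) / (f y - f z) := fun y hy hzy =>
    hm2 (mem_image_of_mem _ ⟨hy, hzy⟩)
  refine ⟨m, ?_, fun x hx => ?_⟩
  · have hlz : z - ε / 2 < z := by linarith
    exact (div_pos (sub_pos.2 (hh hl hz hlz)) (sub_pos.2 (hf hl hz hlz))).trans_le (left _ hl hlz)
  · rcases lt_trichotomy x z with hxz | rfl | hzx
    · have := left x hx hxz
      rw [div_le_iff₀ (sub_pos.2 (hf hx hz hxz))] at this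
      linarith
    · simp
    · have := right x hx hzx
      rwa [le_div_iff₀ (sub_pos.2 (hf hz hx hzx))] at this

theorem differentiableAt_of_squeeze {u h v : ℝ → ℝ} {z : ℝ}
    (hu : DifferentiableAt ℝ u z) (hv : DifferentiableAt ℝ v z)
    (huz : u z = h z) (hvz : v z = h z)
    (h1 : ∀ᶠ x in nhds z, u x ≤ h x) (h2 : ∀ᶠ x in nhds z, h x ≤ v x) :
    DifferentiableAt ℝ h z := by
  have hd : deriv v z - deriv u z = 0 := by
    have hmin : IsLocalMin (fun x => v x - u x) z := by
      filter_upwards [h1, h2] with x hx1 hx2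
      linarith
    exact hmin.hasDerivAt_eq_zero (hv.hasDerivAt.sub hu.hasDerivAt)
  have hu' := hu.hasDerivAt
  have hv' := hv.hasDerivAt
  rw [sub_eq_zero.1 hd] at hv'
  refine HasDerivAt.differentiableAt (f' := deriv u z) ?_
  rw [hasDerivAt_iff_isLittleO] at hu' hv' ⊢
  refine Asymptotics.IsBigO.trans_isLittleO ?_ (hu'.norm_left.add hv'.norm_left)
  refine Asymptotics.IsBigO.of_bound 1 ?_
  filter_upwards [h1, h2] with x hx1 hx2
  simp only [Real.norm_eq_abs, smul_eq_mul, one_mul]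
  refine le_trans ?_ (le_abs_self _)
  rw [huz, hvz]
  have a1 := neg_abs_le (u x - h z - (x - z) * deriv u z)
  have a2 := le_abs_self (v x - h z - (x - z) * deriv u z)
  have a3 := abs_nonneg (u x - h z - (x - z) * deriv u z)
  have a4 := abs_nonneg (v x - h z - (x - z) * deriv u z)
  rw [abs_le]
  constructor <;> linarith

theorem exists_strictMono_generator {I : Set ℝ} {f : ℝ → ℝ} (hf : StrictMonoOrAntiOn f I) :
    ∃ F : ℝ → ℝ, (F = f ∨ F = fun x => -f x) ∧ StrictMonoOn F I := by
  rcases hf with hf | hf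
  · exact ⟨f, Or.inl rfl, hf⟩
  · exact ⟨fun x => -f x, Or.inr rfl, hf.neg⟩

/-- Corollary 3: on an open interval `I`, if `f, g` are differentiable
at every point of `I` and `A^[f] ≤ A^[h] ≤ A^[g]`, then `h` is differentiable at
every point of `I`. -/
theorem differentiable_interval_type
    (I : Set ℝ) (hI : I.OrdConnected) (hIo : IsOpen I)
    (hInontriv : ∃ x ∈ I, ∃ y ∈ I, x < y)
    (f g h : ℝ → ℝ)
    (hfc : ContinuousOn f I) (hgc : ContinuousOn g I) (hhc : ContinuousOn h I)
    (hfm : StrictMonoOrAntiOn f I) (hgm : StrictMonoOrAntiOn g I)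
    (hhm : StrictMonoOrAntiOn h I)
    (hfd : ∀ x ∈ I, DifferentiableAt ℝ f x)
    (hgd : ∀ x ∈ I, DifferentiableAt ℝ g x)
    (hle₁ : qamLE I f h) (hle₂ : qamLE I h g) :
    ∀ x ∈ I, DifferentiableAt ℝ h x := by
  intro z hz
  obtain ⟨F, hF, hFm⟩ := exists_strictMono_generator hfm
  obtain ⟨G, hG, hGm⟩ := exists_strictMono_generator hgm
  obtain ⟨H, hH, hHm⟩ := exists_strictMono_generator hhm
  have hFc : ContinuousOn F I := by rcases hF with rfl | rfl; exacts [hfc, hfc.neg]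
  have hGc : ContinuousOn G I := by rcases hG with rfl | rfl; exacts [hgc, hgc.neg]
  have hHc : ContinuousOn H I := by rcases hH with rfl | rfl; exacts [hhc, hhc.neg]
  have hFd : DifferentiableAt ℝ F z := by
    rcases hF with rfl | rfl; exacts [hfd z hz, (hfd z hz).fun_neg]
  have hGd : DifferentiableAt ℝ G z := by
    rcases hG with rfl | rfl; exacts [hgd z hz, (hgd z hz).fun_neg]
  have hFH : qamLE I F H := by
    intro n hn a ha
    rcases hF with rfl | rfl <;> rcases hH with rfl | rfl <;>
      simpa only [qam_neg] using hle₁ n hn a ha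
  have hHG : qamLE I H G := by
    intro n hn a ha
    rcases hG with rfl | rfl <;> rcases hH with rfl | rfl <;>
      simpa only [qam_neg] using hle₂ n hn a ha
  have hHd : DifferentiableAt ℝ H z := by
    obtain ⟨m, -, hm⟩ := exists_support hI hIo hFc hHc hFm hHm hFH hz
    obtain ⟨M, hM0, hM⟩ := exists_support hI hIo hHc hGc hHm hGm hHG hz
    refine differentiableAt_of_squeeze (u := fun x => H z + m * (F x - F z))
      (v := fun x => H z + M⁻¹ * (G x - G z)) (by fun_prop) (by fun_prop) (by simp) (by simp) ?_ ?_
    · filter_upwards [hIo.mem_nhds hz] with x hx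
      linarith [hm x hx]
    · filter_upwards [hIo.mem_nhds hz] with x hx
      have : H x - H z ≤ M⁻¹ * (G x - G z) := by
        rw [le_inv_mul_iff₀ hM0]
        exact hM x hx
      linarith
  rcases hH with rfl | rfl
  · exact hHd
  · simpa using hHd.fun_neg
end
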